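/- arXiv:1602.08457 — 2 statements merged into one kernel-verified Lean document; each statement's English description precedes it below -/
import Mathlib

section
/- Let M ≥ 0, N ≥ 1, k ∈ I_{M,N}, (ℓ,η) ∈ D^k_{M,N}, γ ∈ Γ^k_{M,N}, j ∈ {1,…,M}, and t ∈ ℂ^N; fix x_i ∈ t_{k_i} + γ_i + √−1·[0,π] for each i ≠ j. Set P⁺ := {t_s + ℓ_s η : 1 ≤ s ≤ k_j} ∪ {x_i − η : i < j}, P⁻ := {t_s − ℓ_s η : k_j ≤ s ≤ N} ∪ {−t_s − ℓ_s η : 1 ≤ s ≤ N} ∪ {−ξ̃₊, −ξ̃₋} ∪ {x_i + η : i > j} ∪ {−x_i + η : i ≠ j}, and S := ((P⁺ − τℤ_{≥0}) ∪ (P⁻ + τℤ_{≥0})) + π√−1·ℤ. Then for every m ∈ I_{M,N}, the function x_j ↦ w_k(x;t)·β_m(x;t) extends to a function holomorphic on ℂ ∖ S; that is, all poles of x_j ↦ w_k(x;t)·β_m(x;t) are contained in S. -/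
open Complex MeasureTheory

noncomputable section

namespace BQKZ

/-- `(z;p)_∞ = ∏_{m ≥ 0} (1 - z pᵐ)`; used with `p = q²`. -/
def poch (p z : ℂ) : ℂ := ∏' m : ℕ, (1 - z * p ^ m)

/-- renormalized Jacobi theta `θ(z) = (z;p)_∞ (p z⁻¹;p)_∞`, with `p = q²`. -/
def theta (p z : ℂ) : ℂ := poch p z * poch p (p * z⁻¹)

/-- `q² = e^{2τ}` where `q = e^τ`. -/
def qsq (τ : ℂ) : ℂ := exp (2 * τ)

/-- `ξ̃₊ = ξ₊ - η/2 - τ/2`. -/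
def xiP (τ η ξp : ℂ) : ℂ := ξp - η / 2 - τ / 2

/-- `ξ̃₋ = ξ₋ - η/2`. -/
def xiM (η ξm : ℂ) : ℂ := ξm - η / 2

/-- `n_k(r) = #{i : k i = r}`. -/
def nk {M N : ℕ} (k : Fin M → Fin N) (r : Fin N) : ℕ :=
  (Finset.univ.filter fun i => k i = r).card

/-- `φ_{k;r}`. -/
def phiC (η ξp ξm : ℂ) {N M : ℕ} (ℓ : Fin N → ℂ) (k : Fin M → Fin N) (r : Fin N) : ℂ :=
  (∏ i ∈ Finset.univ.filter fun i : Fin M => k i = r,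
      exp (2 * (η - ξp - ξm) +
        4 * ((M : ℂ) - ((i : ℕ) + 1) - ∑ s ∈ Finset.univ.filter fun s : Fin N => r ≤ s, ℓ s) * η)) *
    exp (-4 * ℓ r * η * ((Finset.univ.filter fun i : Fin M => r < k i).card : ℂ))

/-- `Φ_k(t)`. -/
def PhiF (τ η ξp ξm : ℂ) {N M : ℕ} (ℓ : Fin N → ℂ) (k : Fin M → Fin N) (t : Fin N → ℂ) : ℂ :=
  ∏ r, theta (qsq τ) (exp (2 * t r)) / theta (qsq τ) (phiC η ξp ξm ℓ k r * exp (2 * t r))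

/-- `F(x;t)`. -/
def Ffun (τ η : ℂ) {N : ℕ} (ℓ : Fin N → ℂ) (x : ℂ) (t : Fin N → ℂ) : ℂ :=
  ∏ s, (poch (qsq τ) (exp (-2 * (t s + x - ℓ s * η))) * poch (qsq τ) (exp (-2 * (t s - x - ℓ s * η)))) /
       (poch (qsq τ) (exp (-2 * (t s + x + ℓ s * η))) * poch (qsq τ) (exp (-2 * (t s - x + ℓ s * η))))

/-- `g(x)`. -/
def gfun (τ η ξp ξm : ℂ) (x : ℂ) : ℂ :=
  (poch (qsq τ) (qsq τ * exp (2 * (xiP τ η ξp - x))) * poch (qsq τ) (qsq τ * exp (2 * (xiM η ξm - x)))) /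
  (poch (qsq τ) (exp (2 * (-xiP τ η ξp - x))) * poch (qsq τ) (exp (2 * (-xiM η ξm - x))))

/-- `h(x)`. -/
def hfun (τ η : ℂ) (x : ℂ) : ℂ :=
  (1 - exp (-2 * x)) * poch (qsq τ) (qsq τ * exp (-2 * (x + η))) / poch (qsq τ) (exp (-2 * (x - η)))

/-- `ψ_{k;i}`. -/
def psiC (τ η ξp ξm : ℂ) {N M : ℕ} (ℓ : Fin N → ℂ) (k : Fin M → Fin N) (i : Fin M) : ℂ :=
  xiP τ η ξp + xiM η ξm + τ + ℓ (k i) * η +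
    2 * ((∑ s ∈ Finset.univ.filter fun s : Fin N => k i < s, ℓ s) - (M : ℂ) + ((i : ℕ) + 1)) * η

/-- `u_{k;i}(x;t)`. -/
def ufun (τ η ξp ξm : ℂ) {N M : ℕ} (ℓ : Fin N → ℂ) (k : Fin M → Fin N) (i : Fin M) (x : ℂ)
    (t : Fin N → ℂ) : ℂ :=
  exp (-t (k i)) * theta (qsq τ) (exp (2 * (x - t (k i) + psiC τ η ξp ξm ℓ k i))) *
    (∏ s ∈ Finset.univ.filter fun s : Fin N => k i < s,
      theta (qsq τ) (exp (2 * (x - t s - ℓ s * η)))) /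
    ∏ s ∈ Finset.univ.filter fun s : Fin N => k i ≤ s,
      theta (qsq τ) (exp (2 * (x - t s + ℓ s * η)))

/-- `w_k(x;t)/Φ_k(t)` (the weight function with the `Φ_k` prefactor cancelled). -/
def w0 (τ η ξp ξm : ℂ) {N M : ℕ} (ℓ : Fin N → ℂ) (k : Fin M → Fin N) (x : Fin M → ℂ)
    (t : Fin N → ℂ) : ℂ :=
  (∏ i, Ffun τ η ℓ (x i) t * gfun τ η ξp ξm (x i) * ufun τ η ξp ξm ℓ k i (x i) t) *
    ∏ p ∈ Finset.univ.filter fun p : Fin M × Fin M => p.1 < p.2,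
      hfun τ η (x p.1 + x p.2) * hfun τ η (x p.1 - x p.2)

/-- the weight function `w_k(x;t)`. -/
def wfun (τ η ξp ξm : ℂ) {N M : ℕ} (ℓ : Fin N → ℂ) (k : Fin M → Fin N) (x : Fin M → ℂ)
    (t : Fin N → ℂ) : ℂ :=
  PhiF τ η ξp ξm ℓ k t * w0 τ η ξp ξm ℓ k x t

/-- sign `ε_i = ±1` encoded by a boolean. -/
def sg {M : ℕ} (ε : Fin M → Bool) (i : Fin M) : ℂ := if ε i then 1 else -1

/-- `S_M k`: rearrangements of `k`. -/
def rearr {M N : ℕ} (k : Fin M → Fin N) : Finset (Fin M → Fin N) :=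
  Finset.univ.filter fun m => ∀ r, nk m r = nk k r

/-- `β_k(x;t)`, the coefficients of the boundary Bethe vectors. -/
def betaF (η ξm : ℂ) {N M : ℕ} (ℓ : Fin N → ℂ) (k : Fin M → Fin N) (x : Fin M → ℂ)
    (t : Fin N → ℂ) : ℂ :=
  exp ((∑ i, ((nk k (k i) : ℂ) / 2 - ℓ (k i))) * η) *
    ∑ m ∈ rearr k, ∑ ε : Fin M → Bool,
      (∏ i,
          sg ε i * sinh (sg ε i * x i - xiM η ξm) / sinh (t (m i) + sg ε i * x i - ℓ (m i) * η) *
            (∏ s ∈ Finset.univ.filter fun s : Fin N => m i < s,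
              sinh (t s + sg ε i * x i + ℓ s * η) / sinh (t s + sg ε i * x i - ℓ s * η)) *
            ∏ s, sinh (t s - sg ε i * x i + ℓ s * η) / sinh (t s - sg ε i * x i - ℓ s * η)) *
        (∏ p ∈ Finset.univ.filter fun p : Fin M × Fin M => p.1 < p.2,
          sinh (sg ε p.1 * x p.1 + sg ε p.2 * x p.2 + η) /
            sinh (sg ε p.1 * x p.1 + sg ε p.2 * x p.2)) *
        ∏ p ∈ Finset.univ.filter fun p : Fin M × Fin M => m p.1 < m p.2,
          sinh (sg ε p.1 * x p.1 - sg ε p.2 * x p.2 - η) /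
            sinh (sg ε p.1 * x p.1 - sg ε p.2 * x p.2)

/-- `(ℓ,η) ∈ D^k_{M,N}`. -/
def Dmn (η : ℂ) {N M : ℕ} (ℓ : Fin N → ℂ) (k : Fin M → Fin N) : Prop :=
  ∀ r, (ℓ r * η).re > max 0 (((nk k r : ℝ) - 1) / 2 * η.re)

/-- the (0-based) position `i_k(s;r) = ∑_{s' < r} n_k(s') + s`. -/
def blockIdx {M N : ℕ} (k : Fin M → Fin N) (r : Fin N) (s : ℕ) : ℕ :=
  (∑ s' ∈ Finset.univ.filter fun s' : Fin N => s' < r, nk k s') + s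

/-- `γ ∈ Γ^k_{M,N}`. -/
def Gam (η : ℂ) {N M : ℕ} (ℓ : Fin N → ℂ) (k : Fin M → Fin N) (γ : Fin M → ℂ) : Prop :=
  (∀ i, -(ℓ (k i) * η).re < (γ i).re ∧ (γ i).re < (ℓ (k i) * η).re) ∧
    ∀ r : Fin N, ∀ s : ℕ, s + 1 < nk k r →
      ∀ (h1 : blockIdx k r s < M) (h2 : blockIdx k r (s + 1) < M),
        (γ ⟨blockIdx k r (s + 1), h2⟩).re ≤ (γ ⟨blockIdx k r s, h1⟩).re ∧
          (γ ⟨blockIdx k r (s + 1), h2⟩).re + η.re < (γ ⟨blockIdx k r s, h1⟩).re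

/-- `γ ∈ Γ^k_{M,N;τ}`. -/
def GamTau (τ η : ℂ) {N M : ℕ} (ℓ : Fin N → ℂ) (k : Fin M → Fin N) (γ : Fin M → ℂ) : Prop :=
  Gam η ℓ k γ ∧
    (∀ i, -(ℓ (k i) * η + τ).re < (γ i).re ∧ (γ i).re < (ℓ (k i) * η + τ).re) ∧
    ∀ r : Fin N, ∀ s : ℕ, s + 1 < nk k r →
      ∀ (h1 : blockIdx k r s < M) (h2 : blockIdx k r (s + 1) < M),
        (γ ⟨blockIdx k r (s + 1), h2⟩).re + (η - τ).re < (γ ⟨blockIdx k r s, h1⟩).re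

/-- `Λ₊ = max_s Re(ℓ_s η)`. -/
def Lam (η : ℂ) {N : ℕ} (ℓ : Fin N → ℂ) : ℝ := ⨆ s, (ℓ s * η).re

/-- the sector `Ã`. -/
def Atil (τ η ξp ξm : ℂ) {N : ℕ} (ℓ : Fin N → ℂ) : Set (Fin N → ℂ) :=
  {t | (∀ i j : Fin N, (j : ℕ) = (i : ℕ) + 1 → (t i - t j).re > 2 * Lam η ℓ + max η.re 0) ∧
       ∀ i : Fin N, (i : ℕ) = N - 1 →
         (t i).re > Lam η ℓ + max (max (η / 2).re 0) (max (-xiP τ η ξp).re (-xiM η ξm).re)}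

/-- the sector `Ã_τ`. -/
def AtilTau (τ η ξp ξm : ℂ) {N : ℕ} (ℓ : Fin N → ℂ) : Set (Fin N → ℂ) :=
  {t | (∀ i j : Fin N, (j : ℕ) = (i : ℕ) + 1 →
          (t i - t j).re > 2 * Lam η ℓ + max η.re 0 - τ.re) ∧
       ∀ i : Fin N, (i : ℕ) = N - 1 →
         (t i).re > Lam η ℓ + max (max (η / 2).re 0) (max (-xiP τ η ξp).re (-xiM η ξm).re) - τ.re}

/-- the cone `Q₊ ⊂ ℤ^N` spanned by the simple roots `e_i - e_{i+1}` and `e_N`. -/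
def Qplus {N : ℕ} : Set (Fin N → ℤ) :=
  {α | ∃ β : Fin N → ℕ, ∀ j : Fin N,
    α j = (β j : ℤ) -
      if _h : 0 < (j : ℕ) then
        (β ⟨(j : ℕ) - 1, lt_of_le_of_lt (Nat.sub_le _ _) j.isLt⟩ : ℤ)
      else 0}

/-- the cube `[0,π]^M` over which the contour integrals are iterated. -/
def box (M : ℕ) : Set (Fin M → ℝ) := Set.univ.pi fun _ => Set.Icc (0 : ℝ) Real.pi

/-- the point of the contour `C^γ_k(t)` with parameters `s ∈ [0,π]^M`. -/
def cpt {M N : ℕ} (k : Fin M → Fin N) (γ : Fin M → ℂ) (t : Fin N → ℂ) (s : Fin M → ℝ) :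
    Fin M → ℂ := fun i => t (k i) + γ i + (s i : ℂ) * I

/-- the iterated contour integral over `C^γ_k(t)`. -/
def contourIntegral {M N : ℕ} (k : Fin M → Fin N) (γ : Fin M → ℂ) (t : Fin N → ℂ)
    (f : (Fin M → ℂ) → ℂ) : ℂ :=
  I ^ M * ∫ s in box M, f (cpt k γ t s)

/-- nonvanishing of all denominators occurring in `w_k(x;t)/Φ_k(t)`. -/
def w0DenomOK (τ η ξp ξm : ℂ) {N M : ℕ} (ℓ : Fin N → ℂ) (k : Fin M → Fin N) (x : Fin M → ℂ)
    (t : Fin N → ℂ) : Prop :=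
  (∀ s : Fin N, ∀ i : Fin M,
      poch (qsq τ) (exp (-2 * (t s + x i + ℓ s * η))) ≠ 0 ∧
      poch (qsq τ) (exp (-2 * (t s - x i + ℓ s * η))) ≠ 0) ∧
  (∀ i : Fin M,
      poch (qsq τ) (exp (2 * (-xiP τ η ξp - x i))) ≠ 0 ∧
      poch (qsq τ) (exp (2 * (-xiM η ξm - x i))) ≠ 0) ∧
  (∀ i : Fin M, ∀ s : Fin N, k i ≤ s → theta (qsq τ) (exp (2 * (x i - t s + ℓ s * η))) ≠ 0) ∧
  ∀ i j : Fin M, i < j →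
      poch (qsq τ) (exp (-2 * (x i + x j - η))) ≠ 0 ∧
      poch (qsq τ) (exp (-2 * (x i - x j - η))) ≠ 0

/-- nonvanishing of the theta denominators of `Φ_k(t)`. -/
def PhiDenomOK (τ η ξp ξm : ℂ) {N M : ℕ} (ℓ : Fin N → ℂ) (k : Fin M → Fin N)
    (t : Fin N → ℂ) : Prop :=
  ∀ r, theta (qsq τ) (phiC η ξp ξm ℓ k r * exp (2 * t r)) ≠ 0

/-- nonvanishing of all sinh denominators occurring in `β_m(x;t)` (for any rearrangement `m`). -/
def betaDenomOK (η : ℂ) {N M : ℕ} (ℓ : Fin N → ℂ) (x : Fin M → ℂ) (t : Fin N → ℂ) : Prop :=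
  (∀ s : Fin N, ∀ i : Fin M,
      sinh (t s + x i - ℓ s * η) ≠ 0 ∧ sinh (t s - x i - ℓ s * η) ≠ 0) ∧
  ∀ i j : Fin M, i < j → sinh (x i + x j) ≠ 0 ∧ sinh (x i - x j) ≠ 0

lemma norm_qsq_lt (τ : ℂ) (hτ : τ.re < 0) : ‖qsq τ‖ < 1 := by
  unfold qsq
  rw [Complex.norm_exp]
  rw [← Real.exp_zero, Real.exp_lt_exp]
  have h : (2 * τ).re = 2 * τ.re := by simp
  rw [h]
  linarith

lemma poch_summable {p : ℂ} (hp : ‖p‖ < 1) (z : ℂ) : Summable fun m : ℕ => ‖-(z * p ^ m)‖ := by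
  simp only [norm_neg, norm_mul, norm_pow]
  exact (summable_geometric_of_lt_one (norm_nonneg _) hp).mul_left _

lemma poch_ne_zero {p : ℂ} (hp : ‖p‖ < 1) (z : ℂ) (h : ∀ m : ℕ, z * p ^ m ≠ 1) :
    poch p z ≠ 0 := by
  unfold poch
  simp only [sub_eq_add_neg]
  refine tprod_one_add_ne_zero_of_summable (f := fun m : ℕ => -(z * p ^ m)) ?_ (poch_summable hp z)
  intro i hi
  apply h i
  linear_combination -hi

lemma poch_rec {p : ℂ} (hp : ‖p‖ < 1) (z : ℂ) : poch p z = (1 - z) * poch p (p * z) := by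
  unfold poch
  have h1 : Multipliable fun m : ℕ => (1 - (p * z) * p ^ m) := by
    simp only [sub_eq_add_neg]
    exact multipliable_one_add_of_summable (poch_summable hp (p * z))
  have e : ∀ m : ℕ, (1 - (p * z) * p ^ m) = 1 - z * p ^ (m + 1) := by
    intro m; ring
  simp only [e] at h1 ⊢
  rw [tprod_eq_zero_mul' (f := fun m : ℕ => 1 - z * p ^ m) h1]
  simp

lemma poch_diff {p : ℂ} (hp : ‖p‖ < 1) : Differentiable ℂ (poch p) := by
  have h : MultipliableLocallyUniformlyOn (fun (n : ℕ) (z : ℂ) => 1 - z * p ^ n) Set.univ := by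
    use fun z => ∏' n : ℕ, (1 - z * p ^ n)
    simp_rw [sub_eq_add_neg]
    apply hasProdLocallyUniformlyOn_of_forall_compact isOpen_univ
    intro K _ hcK
    obtain ⟨R, hR⟩ := hcK.isBounded.exists_norm_le
    refine ((summable_geometric_of_lt_one (norm_nonneg _) hp).mul_left
      R).hasProdUniformlyOn_nat_one_add hcK (.of_forall fun n z hz ↦ ?_) (fun _ ↦ by fun_prop)
    simp only [norm_neg, norm_mul, norm_pow]
    exact mul_le_mul_of_nonneg_right (hR z hz) (by positivity)
  rw [← differentiableOn_univ]
  exact h.hasProdLocallyUniformlyOn.differentiableOn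
    (.of_forall fun _ ↦ by simpa [Finset.prod_fn] using
      DifferentiableOn.finsetProd (fun _ _ ↦ by fun_prop)) isOpen_univ

lemma poch_exp_zero (τ : ℂ) (hτ : τ.re < 0) (a : ℂ) (h : poch (qsq τ) (exp (-2 * a)) = 0) :
    ∃ n : ℕ, ∃ mz : ℤ, a = (n : ℂ) * τ + (mz : ℂ) * ((Real.pi : ℂ) * I) := by
  by_contra hc
  push Not at hc
  refine poch_ne_zero (norm_qsq_lt τ hτ) _ ?_ h
  intro n hn
  unfold qsq at hn
  rw [← Complex.exp_nat_mul, ← Complex.exp_add, Complex.exp_eq_one_iff] at hn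
  obtain ⟨m, hm⟩ := hn
  apply hc n (-m)
  push_cast
  linear_combination (-1 / 2 : ℂ) * hm

lemma sinh_zero (a : ℂ) (h : sinh a = 0) :
    ∃ mz : ℤ, a = (mz : ℂ) * ((Real.pi : ℂ) * I) := by
  have h2 : exp (2 * a) = 1 := by
    have : exp (2 * a) = 1 + 2 * exp a * sinh a := by
      rw [Complex.sinh, two_mul, Complex.exp_add, Complex.exp_neg]
      field_simp [Complex.exp_ne_zero a]
      ring
    rw [this, h]; ring
  rw [Complex.exp_eq_one_iff] at h2
  obtain ⟨m, hm⟩ := h2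
  exact ⟨m, by linear_combination (1 / 2 : ℂ) * hm⟩

lemma one_sub_exp (a : ℂ) : 1 - exp (-2 * a) = 2 * exp (-a) * sinh a := by
  rw [Complex.sinh, show -2 * a = -a + -a by ring, Complex.exp_add, Complex.exp_neg]
  field_simp [Complex.exp_ne_zero a]

/-- `f` agrees on `OK` with a function holomorphic off `S`. -/
def Ext (S : Set ℂ) (OK : ℂ → Prop) (f : ℂ → ℂ) : Prop :=
  ∃ G : ℂ → ℂ, DifferentiableOn ℂ G Sᶜ ∧ ∀ z : ℂ, z ∉ S → OK z → G z = f z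

section
variable {S : Set ℂ} {OK : ℂ → Prop}

lemma Ext.of_diff {f : ℂ → ℂ} (h : Differentiable ℂ f) : Ext S OK f :=
  ⟨f, h.differentiableOn, fun _ _ _ => rfl⟩

lemma Ext.const (c : ℂ) : Ext S OK fun _ => c := .of_diff (by fun_prop)

lemma Ext.inv {f : ℂ → ℂ} (h : Differentiable ℂ f) (h0 : ∀ z, z ∉ S → f z ≠ 0) :
    Ext S OK fun z => (f z)⁻¹ :=
  ⟨_, h.differentiableOn.fun_inv fun z hz => h0 z hz, fun _ _ _ => rfl⟩

lemma Ext.mul {f g : ℂ → ℂ} (hf : Ext S OK f) (hg : Ext S OK g) :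
    Ext S OK fun z => f z * g z := by
  obtain ⟨F, hF, hF'⟩ := hf
  obtain ⟨G, hG, hG'⟩ := hg
  exact ⟨fun z => F z * G z, hF.mul hG, fun z hz ho => by
    simp only [hF' z hz ho, hG' z hz ho]⟩

lemma Ext.congr {f g : ℂ → ℂ} (hf : Ext S OK f) (h : ∀ z, z ∉ S → OK z → f z = g z) :
    Ext S OK g := by
  obtain ⟨F, hF, hF'⟩ := hf
  exact ⟨F, hF, fun z hz ho => (hF' z hz ho).trans (h z hz ho)⟩

lemma Ext.sum {ι : Type*} (s : Finset ι) {f : ι → ℂ → ℂ} (hf : ∀ i ∈ s, Ext S OK (f i)) :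
    Ext S OK fun z => ∑ i ∈ s, f i z := by
  choose! F hF hF' using hf
  refine ⟨fun z => ∑ i ∈ s, F i z, DifferentiableOn.fun_sum hF, fun z hz ho => ?_⟩
  exact Finset.sum_congr rfl fun i hi => hF' i hi z hz ho

lemma Ext.prod {ι : Type*} (s : Finset ι) {f : ι → ℂ → ℂ} (hf : ∀ i ∈ s, Ext S OK (f i)) :
    Ext S OK fun z => ∏ i ∈ s, f i z := by
  classical
  induction s using Finset.induction_on with
  | empty => simpa using Ext.const 1
  | insert a s ha ih =>
    simp only [Finset.prod_insert ha]
    exact (hf a (by simp)).mul (ih fun i hi => hf i (by simp [hi]))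

/-- `poch (e^{-2a}) / sinh a` has no pole. -/
lemma ext_poch_sinh {τ : ℂ} (hτ : τ.re < 0) {a d : ℂ → ℂ} (ha : Differentiable ℂ a)
    (hd : ∀ z, d z = a z) (hOK : ∀ z, OK z → sinh (a z) ≠ 0) :
    Ext S OK fun z => poch (qsq τ) (exp (-2 * a z)) * (sinh (d z))⁻¹ := by
  have hp := poch_diff (norm_qsq_lt τ hτ)
  have h : Ext S OK fun z => 2 * exp (-a z) * poch (qsq τ) (qsq τ * exp (-2 * a z)) :=
    .of_diff ((by fun_prop : Differentiable ℂ fun z => 2 * exp (-a z)).mul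
      (hp.comp (by fun_prop : Differentiable ℂ fun z => qsq τ * exp (-2 * a z))))
  refine h.congr fun z _ ho => ?_
  rw [poch_rec (norm_qsq_lt τ hτ) (exp (-2 * a z)), one_sub_exp, hd]
  have := hOK z ho
  field_simp

/-- `h(b)` -/
lemma ext_h0 {τ η : ℂ} (hτ : τ.re < 0) {b : ℂ → ℂ} (hb : Differentiable ℂ b)
    (hne : ∀ z, z ∉ S → poch (qsq τ) (exp (-2 * (b z - η))) ≠ 0) :
    Ext S OK fun z => hfun τ η (b z) := by
  have hp := poch_diff (norm_qsq_lt τ hτ)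
  have h1 : Ext S OK fun z => (1 - exp (-2 * b z)) * poch (qsq τ) (qsq τ * exp (-2 * (b z + η))) :=
    .of_diff ((by fun_prop : Differentiable ℂ fun z => (1 - exp (-2 * b z))).mul
      (hp.comp (by fun_prop : Differentiable ℂ fun z => qsq τ * exp (-2 * (b z + η)))))
  have h2 : Ext S OK fun z => (poch (qsq τ) (exp (-2 * (b z - η))))⁻¹ :=
    .inv (hp.comp (by fun_prop : Differentiable ℂ fun z => exp (-2 * (b z - η)))) hne
  exact h1.mul h2

/-- `h(b) / sinh(± b)` -/
lemma ext_h {τ η : ℂ} (hτ : τ.re < 0) {b : ℂ → ℂ} (hb : Differentiable ℂ b)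
    (hne : ∀ z, z ∉ S → poch (qsq τ) (exp (-2 * (b z - η))) ≠ 0)
    (hOK : ∀ z, OK z → sinh (b z) ≠ 0) {n d : ℂ → ℂ} (hn : Differentiable ℂ n)
    (hd : (∀ z, d z = b z) ∨ (∀ z, d z = - b z)) :
    Ext S OK fun z => hfun τ η (b z) * (n z / sinh (d z)) := by
  have hp := poch_diff (norm_qsq_lt τ hτ)
  have h1 : Ext S OK fun z => (2 * exp (-b z)) * poch (qsq τ) (qsq τ * exp (-2 * (b z + η))) :=
    .of_diff ((by fun_prop : Differentiable ℂ fun z => (2 * exp (-b z))).mul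
      (hp.comp (by fun_prop : Differentiable ℂ fun z => qsq τ * exp (-2 * (b z + η)))))
  have h2 : Ext S OK fun z => (poch (qsq τ) (exp (-2 * (b z - η))))⁻¹ :=
    .inv (hp.comp (by fun_prop : Differentiable ℂ fun z => exp (-2 * (b z - η)))) hne
  rcases hd with hd | hd
  · refine ((h1.mul h2).mul (.of_diff hn)).congr fun z hz ho => ?_
    have h3 := hOK z ho
    have h4 := hne z hz
    unfold hfun
    rw [one_sub_exp, hd]
    field_simp
  · refine ((h1.mul h2).mul (.of_diff hn.neg)).congr fun z hz ho => ?_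
    have h3 := hOK z ho
    have h4 := hne z hz
    unfold hfun
    rw [one_sub_exp, hd, Complex.sinh_neg]
    simp only [Pi.neg_apply]
    field_simp

end

lemma prod_pairs {M : ℕ} (f : Fin M × Fin M → ℂ) (hf : ∀ i, f (i, i) = 1) :
    ∏ p, f p = ∏ p ∈ Finset.univ.filter (fun p : Fin M × Fin M => p.1 < p.2),
      (f p * f p.swap) := by
  rw [Finset.prod_mul_distrib,
    ← Finset.prod_filter_mul_prod_filter_not Finset.univ (fun p : Fin M × Fin M => p.1 < p.2)]
  congr 1
  rw [← Finset.prod_filter_mul_prod_filter_not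
    (Finset.univ.filter (fun p : Fin M × Fin M => ¬ p.1 < p.2)) (fun p => p.2 < p.1)]
  rw [Finset.prod_eq_one (s := Finset.filter (fun p : Fin M × Fin M => ¬ p.2 < p.1) _), mul_one]
  · refine Finset.prod_nbij' Prod.swap Prod.swap ?_ ?_ ?_ ?_ ?_
    · simp
    · simp only [Finset.mem_filter, Finset.mem_univ, true_and, Prod.fst_swap, Prod.snd_swap]
      intro p hp; exact ⟨not_lt.2 hp.le, hp⟩
    · simp
    · simp
    · simp
  · rintro ⟨a, b⟩ h
    simp only [Finset.mem_filter, Finset.mem_univ, true_and, not_lt] at h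
    obtain rfl : a = b := le_antisymm h.2 h.1
    exact hf a

/-- the pair factor -/
lemma ext_pair {S : Set ℂ} {OK : ℂ → Prop} {τ η : ℂ} (hτ : τ.re < 0) {X Y : ℂ → ℂ}
    (hX : Differentiable ℂ X) (hY : Differentiable ℂ Y)
    (h1 : ∀ z, z ∉ S → poch (qsq τ) (exp (-2 * (X z + Y z - η))) ≠ 0)
    (h2 : ∀ z, z ∉ S → poch (qsq τ) (exp (-2 * (X z - Y z - η))) ≠ 0)
    (hOK : ∀ z, OK z → sinh (X z + Y z) ≠ 0 ∧ sinh (X z - Y z) ≠ 0)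
    (e f : ℂ) (he : e = 1 ∨ e = -1) (hf : f = 1 ∨ f = -1) (c c' : Prop) [Decidable c] [Decidable c']
    (hcc : ¬ (c ∧ c')) :
    Ext S OK fun z => hfun τ η (X z + Y z) * hfun τ η (X z - Y z) *
      (sinh (e * X z + f * Y z + η) / sinh (e * X z + f * Y z)) *
      ((if c then sinh (e * X z - f * Y z - η) / sinh (e * X z - f * Y z) else 1) *
       (if c' then sinh (f * Y z - e * X z - η) / sinh (f * Y z - e * X z) else 1)) := by
  have hp : Differentiable ℂ fun z => X z + Y z := hX.add hY
  have hm : Differentiable ℂ fun z => X z - Y z := hX.sub hY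
  have ok1 : ∀ z, OK z → sinh (X z + Y z) ≠ 0 := fun z h => (hOK z h).1
  have ok2 : ∀ z, OK z → sinh (X z - Y z) ≠ 0 := fun z h => (hOK z h).2
  have n1 : Differentiable ℂ fun z => sinh (e * X z + f * Y z + η) := by fun_prop
  have n2 : Differentiable ℂ fun z => sinh (e * X z - f * Y z - η) := by fun_prop
  have n3 : Differentiable ℂ fun z => sinh (f * Y z - e * X z - η) := by fun_prop
  have key : ((((∀ z, e * X z + f * Y z = X z + Y z) ∨ (∀ z, e * X z + f * Y z = -(X z + Y z))) ∧
      ((∀ z, e * X z - f * Y z = X z - Y z) ∨ (∀ z, e * X z - f * Y z = -(X z - Y z))) ∧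
      ((∀ z, f * Y z - e * X z = X z - Y z) ∨ (∀ z, f * Y z - e * X z = -(X z - Y z)))) ∨
     (((∀ z, e * X z + f * Y z = X z - Y z) ∨ (∀ z, e * X z + f * Y z = -(X z - Y z))) ∧
      ((∀ z, e * X z - f * Y z = X z + Y z) ∨ (∀ z, e * X z - f * Y z = -(X z + Y z))) ∧
      ((∀ z, f * Y z - e * X z = X z + Y z) ∨ (∀ z, f * Y z - e * X z = -(X z + Y z))))) := by
    rcases he with rfl | rfl <;> rcases hf with rfl | rfl
    · exact .inl ⟨.inl fun z => by ring, .inl fun z => by ring, .inr fun z => by ring⟩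
    · exact .inr ⟨.inl fun z => by ring, .inl fun z => by ring, .inr fun z => by ring⟩
    · exact .inr ⟨.inr fun z => by ring, .inr fun z => by ring, .inl fun z => by ring⟩
    · exact .inl ⟨.inr fun z => by ring, .inr fun z => by ring, .inl fun z => by ring⟩
  rcases key with ⟨k1, k2, k3⟩ | ⟨k1, k2, k3⟩
  · have a1 := ext_h (S := S) (OK := OK) (η := η) hτ hp h1 ok1 n1 k1
    by_cases hc : c
    · have hc' : ¬ c' := fun h => hcc ⟨hc, h⟩
      refine (a1.mul (ext_h (η := η) hτ hm h2 ok2 n2 k2)).congr fun z _ _ => ?_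
      rw [if_pos hc, if_neg hc']; ring
    · by_cases hc' : c'
      · refine (a1.mul (ext_h (η := η) hτ hm h2 ok2 n3 k3)).congr fun z _ _ => ?_
        rw [if_neg hc, if_pos hc']; ring
      · refine (a1.mul (ext_h0 (η := η) hτ hm h2)).congr fun z _ _ => ?_
        rw [if_neg hc, if_neg hc']; ring
  · have a1 := ext_h (S := S) (OK := OK) (η := η) hτ hm h2 ok2 n1 k1
    by_cases hc : c
    · have hc' : ¬ c' := fun h => hcc ⟨hc, h⟩
      refine (a1.mul (ext_h (η := η) hτ hp h1 ok1 n2 k2)).congr fun z _ _ => ?_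
      rw [if_pos hc, if_neg hc']; ring
    · by_cases hc' : c'
      · refine (a1.mul (ext_h (η := η) hτ hp h1 ok1 n3 k3)).congr fun z _ _ => ?_
        rw [if_neg hc, if_pos hc']; ring
      · refine (a1.mul (ext_h0 (η := η) hτ hp h1)).congr fun z _ _ => ?_
        rw [if_neg hc, if_neg hc']; ring

/-- the factor at site `s` -/
def siteF (τ L T : ℂ) (lt le mlt mle : Prop) [Decidable lt] [Decidable le] [Decidable mlt]
    [Decidable mle] (e z : ℂ) : ℂ :=
  (poch (qsq τ) (exp (-2 * (T + z - L))) * poch (qsq τ) (exp (-2 * (T - z - L)))) /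
       (poch (qsq τ) (exp (-2 * (T + z + L))) * poch (qsq τ) (exp (-2 * (T - z + L)))) *
  (if lt then theta (qsq τ) (exp (2 * (z - T - L))) else 1) *
  (if le then theta (qsq τ) (exp (2 * (z - T + L))) else 1)⁻¹ *
  (if mle then (sinh (T + e * z - L))⁻¹ else 1) *
  (if mlt then sinh (T + e * z + L) else 1) *
  (sinh (T - e * z + L) / sinh (T - e * z - L))

lemma ext_site {S : Set ℂ} {OK : ℂ → Prop} {τ : ℂ} (hτ : τ.re < 0) (L T : ℂ)
    (lt le mlt mle : Prop) [Decidable lt] [Decidable le] [Decidable mlt]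
    [Decidable mle] (e : ℂ) (he : e = 1 ∨ e = -1)
    (h1 : ∀ z, z ∉ S → poch (qsq τ) (exp (-2 * (T + z + L))) ≠ 0)
    (h2 : ¬ lt → ∀ z, z ∉ S → poch (qsq τ) (exp (-2 * (T - z + L))) ≠ 0)
    (h3 : le → ∀ z, z ∉ S → poch (qsq τ) (qsq τ * exp (2 * (T - z - L))) ≠ 0)
    (h4 : le → ∀ z, z ∉ S → sinh (T - z - L) ≠ 0)
    (hOK1 : ∀ z, OK z → sinh (T + z - L) ≠ 0 ∧ sinh (T - z - L) ≠ 0)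
    (hOK2 : ∀ z, OK z → poch (qsq τ) (exp (-2 * (T - z + L))) ≠ 0)
    (hOK3 : le → ∀ z, OK z → theta (qsq τ) (exp (2 * (z - T + L))) ≠ 0) :
    Ext S OK (siteF τ L T lt le mlt mle e) := by
  have hp := poch_diff (norm_qsq_lt τ hτ)
  have dP : ∀ a : ℂ → ℂ, Differentiable ℂ a →
      Differentiable ℂ fun z => poch (qsq τ) (exp (-2 * a z)) := fun a ha =>
    hp.comp (by fun_prop : Differentiable ℂ fun z => exp (-2 * a z))
  have dQ : ∀ a : ℂ → ℂ, Differentiable ℂ a →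
      Differentiable ℂ fun z => poch (qsq τ) (qsq τ * exp (2 * a z)) := fun a ha =>
    hp.comp (by fun_prop : Differentiable ℂ fun z => qsq τ * exp (2 * a z))
  have E1 : Ext S OK fun z => (poch (qsq τ) (exp (-2 * (T + z + L))))⁻¹ :=
    .inv (dP (fun z => T + z + L) (by fun_prop)) h1
  have E2 : Ext S OK fun z => (poch (qsq τ) (exp (-2 * (T - z + L))))⁻¹ *
      (if lt then theta (qsq τ) (exp (2 * (z - T - L))) else 1) := by
    by_cases hl : lt
    · refine (Ext.of_diff (dQ (fun z => T - z + L) (by fun_prop))).congr fun z _ ho => ?_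
      have h0 := hOK2 z ho
      rw [if_pos hl, theta, ← Complex.exp_neg, show 2 * (z - T - L) = -2 * (T - z + L) by ring,
        show -(-2 * (T - z + L)) = 2 * (T - z + L) by ring, inv_mul_cancel_left₀ h0]
    · simp only [if_neg hl, mul_one]
      exact .inv (dP (fun z => T - z + L) (by fun_prop)) (h2 hl)
  have E3 : ∀ (c : Prop) [Decidable c], Ext S OK fun z => poch (qsq τ) (exp (-2 * (T + z - L))) *
      (if c then (sinh (T + z - L))⁻¹ else 1) := by
    intro c _
    by_cases hc : c
    · simp only [if_pos hc]
      exact ext_poch_sinh hτ (a := fun z => T + z - L) (by fun_prop) (fun _ => rfl)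
        fun z h => (hOK1 z h).1
    · simp only [if_neg hc, mul_one]
      exact .of_diff (dP (fun z => T + z - L) (by fun_prop))
  have E4 : ∀ (c : Prop) [Decidable c], Ext S OK fun z => poch (qsq τ) (exp (-2 * (T - z - L))) *
      (if le then theta (qsq τ) (exp (2 * (z - T + L))) else 1)⁻¹ *
      (if c then (sinh (T - z - L))⁻¹ else 1) := by
    intro c _
    by_cases hl : le
    · refine Ext.mul ?_ ?_
      · refine (Ext.inv (dQ (fun z => T - z - L) (by fun_prop)) (h3 hl)).congr fun z _ ho => ?_
        have h0 := hOK3 hl z ho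
        rw [if_pos hl]
        rw [theta, ← Complex.exp_neg, show 2 * (z - T + L) = -2 * (T - z - L) by ring,
          show -(-2 * (T - z - L)) = 2 * (T - z - L) by ring] at h0 ⊢
        rw [mul_inv, mul_inv_cancel_left₀ (left_ne_zero_of_mul h0)]
      · by_cases hc : c
        · simp only [if_pos hc]
          exact .inv (by fun_prop) (h4 hl)
        · simp only [if_neg hc]
          exact .const 1
    · by_cases hc : c
      · simp only [if_neg hl, if_pos hc, inv_one, mul_one]
        exact ext_poch_sinh hτ (a := fun z => T - z - L) (by fun_prop) (fun _ => rfl)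
          fun z h => (hOK1 z h).2
      · simp only [if_neg hl, if_neg hc, inv_one, mul_one]
        exact .of_diff (dP (fun z => T - z - L) (by fun_prop))
  have E5 : Ext S OK fun z => (if mlt then sinh (T + e * z + L) else 1) * sinh (T - e * z + L) := by
    refine .of_diff ?_
    by_cases hc : mlt
    · simp only [if_pos hc]; fun_prop
    · simp only [if_neg hc]; fun_prop
  rcases he with rfl | rfl
  · refine ((((E1.mul E2).mul (E3 mle)).mul (E4 True)).mul E5).congr fun z _ _ => ?_
    simp only [siteF, if_true, one_mul, div_eq_mul_inv, mul_inv]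
    ring
  · refine ((((E1.mul E2).mul (E3 True)).mul (E4 mle)).mul E5).congr fun z _ _ => ?_
    simp only [siteF, if_true, neg_mul, one_mul, div_eq_mul_inv, mul_inv, sub_neg_eq_add,
      ← sub_eq_add_neg]
    ring

lemma prod_ge {N : ℕ} (a : Fin N) (f : Fin N → ℂ) :
    f a * ∏ s ∈ Finset.univ.filter (fun s => a < s), f s = ∏ s, if a ≤ s then f s else 1 := by
  rw [← Finset.prod_filter, ← Finset.prod_insert (by simp)]
  congr 1
  ext s
  simp [le_iff_eq_or_lt, eq_comm]

/-- the factor of index `i` in one term of `w * beta` -/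
def oneF (τ η ξp ξm : ℂ) {N M : ℕ} (ℓ : Fin N → ℂ) (k m : Fin M → Fin N) (t : Fin N → ℂ)
    (i : Fin M) (e z : ℂ) : ℂ :=
  Ffun τ η ℓ z t * gfun τ η ξp ξm z * ufun τ η ξp ξm ℓ k i z t *
  (e * sinh (e * z - xiM η ξm) / sinh (t (m i) + e * z - ℓ (m i) * η) *
            (∏ s ∈ Finset.univ.filter fun s : Fin N => m i < s,
              sinh (t s + e * z + ℓ s * η) / sinh (t s + e * z - ℓ s * η)) *
            ∏ s, sinh (t s - e * z + ℓ s * η) / sinh (t s - e * z - ℓ s * η))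

lemma oneF_eq (τ η ξp ξm : ℂ) {N M : ℕ} (ℓ : Fin N → ℂ) (k m : Fin M → Fin N) (t : Fin N → ℂ)
    (i : Fin M) (e z : ℂ) : oneF τ η ξp ξm ℓ k m t i e z =
    gfun τ η ξp ξm z * (exp (-t (k i)) * theta (qsq τ) (exp (2 * (z - t (k i) +
      psiC τ η ξp ξm ℓ k i))) * (e * sinh (e * z - xiM η ξm))) *
    ∏ s, siteF τ (ℓ s * η) (t s) (k i < s) (k i ≤ s) (m i < s) (m i ≤ s) e z := by
  have h := prod_ge (m i) fun s => (sinh (t s + e * z - ℓ s * η))⁻¹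
  simp only [siteF, Finset.prod_mul_distrib, ← h, Finset.prod_inv_distrib]
  simp only [oneF, Ffun, ufun, div_eq_mul_inv, Finset.prod_mul_distrib, ← Finset.prod_filter,
    Finset.prod_inv_distrib]
  ring

/-- Lemma on pole location: for fixed `x_i` on the shifted segments
(`i ≠ j`), all poles of `x_j ↦ w_k(x;t)·β_m(x;t)` are contained in the set `S`;
i.e. the function extends holomorphically to `ℂ ∖ S`. -/
theorem stmt13 (τ η ξp ξm : ℂ) (hτ : τ.re < 0) (M N : ℕ) (hN : 1 ≤ N)
    (ℓ : Fin N → ℂ) (k : Fin M → Fin N) (hk : Monotone k)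
    (hD : Dmn η ℓ k) (γ : Fin M → ℂ) (hγ : Gam η ℓ k γ) (j : Fin M)
    (t : Fin N → ℂ) (x : Fin M → ℂ)
    (hx : ∀ i : Fin M, i ≠ j → ∃ s ∈ Set.Icc (0 : ℝ) Real.pi,
      x i = t (k i) + γ i + (s : ℂ) * I)
    (S : Set ℂ)
    (hS : S = {z : ℂ |
      (∃ w : ℂ,
        ((∃ s : Fin N, s ≤ k j ∧ w = t s + ℓ s * η) ∨ (∃ i : Fin M, i < j ∧ w = x i - η)) ∧
        ∃ n : ℕ, ∃ mz : ℤ, z = w - (n : ℂ) * τ + (mz : ℂ) * ((Real.pi : ℂ) * I)) ∨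
      (∃ w : ℂ,
        ((∃ s : Fin N, k j ≤ s ∧ w = t s - ℓ s * η) ∨ (∃ s : Fin N, w = -t s - ℓ s * η) ∨
          w = -xiP τ η ξp ∨ w = -xiM η ξm ∨
          (∃ i : Fin M, j < i ∧ w = x i + η) ∨ (∃ i : Fin M, i ≠ j ∧ w = -x i + η)) ∧
        ∃ n : ℕ, ∃ mz : ℤ, z = w + (n : ℂ) * τ + (mz : ℂ) * ((Real.pi : ℂ) * I))}) :
    ∀ m : Fin M → Fin N, Monotone m →
      ∃ G : ℂ → ℂ, DifferentiableOn ℂ G Sᶜ ∧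
        ∀ z : ℂ, z ∉ S →
          w0DenomOK τ η ξp ξm ℓ k (Function.update x j z) t →
          PhiDenomOK τ η ξp ξm ℓ k t →
          betaDenomOK η ℓ (Function.update x j z) t →
          G z = wfun τ η ξp ξm ℓ k (Function.update x j z) t *
              betaF η ξm ℓ m (Function.update x j z) t := by
  intro m _
  set OK : ℂ → Prop := fun z => w0DenomOK τ η ξp ξm ℓ k (Function.update x j z) t ∧
    PhiDenomOK τ η ξp ξm ℓ k t ∧ betaDenomOK η ℓ (Function.update x j z) t with hOKdef
  suffices H : Ext S OK fun z => wfun τ η ξp ξm ℓ k (Function.update x j z) t *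
      betaF η ξm ℓ m (Function.update x j z) t by
    obtain ⟨G, hG, hG'⟩ := H
    exact ⟨G, hG, fun z hz h1 h2 h3 => hG' z hz ⟨h1, h2, h3⟩⟩
  have hp := poch_diff (norm_qsq_lt τ hτ)
  -- membership in `S`
  have memP : ∀ (z w : ℂ), ((∃ s : Fin N, s ≤ k j ∧ w = t s + ℓ s * η) ∨
      (∃ i : Fin M, i < j ∧ w = x i - η)) → ∀ (n : ℕ) (mz : ℤ),
      z = w - (n : ℂ) * τ + (mz : ℂ) * ((Real.pi : ℂ) * I) → z ∈ S := by
    intro z w hw n mz h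
    rw [hS]
    exact .inl ⟨w, hw, n, mz, h⟩
  have memM : ∀ (z w : ℂ), ((∃ s : Fin N, k j ≤ s ∧ w = t s - ℓ s * η) ∨
          (∃ s : Fin N, w = -t s - ℓ s * η) ∨
          w = -xiP τ η ξp ∨ w = -xiM η ξm ∨
          (∃ i : Fin M, j < i ∧ w = x i + η) ∨ (∃ i : Fin M, i ≠ j ∧ w = -x i + η)) →
      ∀ (n : ℕ) (mz : ℤ), z = w + (n : ℂ) * τ + (mz : ℂ) * ((Real.pi : ℂ) * I) → z ∈ S := by
    intro z w hw n mz h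
    rw [hS]
    exact .inr ⟨w, hw, n, mz, h⟩
  clear hS
  -- the factor with index `j`
  have hone : ∀ (m' : Fin M → Fin N) (e : ℂ), (e = 1 ∨ e = -1) →
      Ext S OK fun z => oneF τ η ξp ξm ℓ k m' t j e z := by
    intro m' e he
    simp only [oneF_eq]
    refine Ext.mul (Ext.mul ?_ ?_) ?_
    · have a1 : Ext S OK fun z => poch (qsq τ) (qsq τ * exp (2 * (xiP τ η ξp - z))) *
          poch (qsq τ) (qsq τ * exp (2 * (xiM η ξm - z))) :=
        .of_diff ((hp.comp (by fun_prop :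
            Differentiable ℂ fun z => qsq τ * exp (2 * (xiP τ η ξp - z)))).mul
          (hp.comp (by fun_prop : Differentiable ℂ fun z => qsq τ * exp (2 * (xiM η ξm - z)))))
      have a2 : ∀ c : ℂ, (c = xiP τ η ξp ∨ c = xiM η ξm) →
          Ext S OK fun z => (poch (qsq τ) (exp (2 * (-c - z))))⁻¹ := by
        intro c hc
        refine .inv (hp.comp (by fun_prop : Differentiable ℂ fun z => exp (2 * (-c - z)))) ?_
        intro z hz h
        rw [show 2 * (-c - z) = -2 * (c + z) by ring] at h
        obtain ⟨n, mz, h⟩ := poch_exp_zero τ hτ _ h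
        refine hz (memM z (-c) ?_ n mz (by linear_combination h))
        rcases hc with rfl | rfl
        · exact .inr (.inr (.inl rfl))
        · exact .inr (.inr (.inr (.inl rfl)))
      refine (a1.mul ((a2 _ (.inl rfl)).mul (a2 _ (.inr rfl)))).congr fun z _ _ => ?_
      simp only [gfun, div_eq_mul_inv, mul_inv]
    · refine .of_diff (.mul (.mul (by fun_prop) ?_) (by fun_prop))
      unfold theta
      refine .mul (hp.comp (by fun_prop : Differentiable ℂ fun z =>
        exp (2 * (z - t (k j) + psiC τ η ξp ξm ℓ k j)))) ?_
      simp only [← Complex.exp_neg]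
      exact hp.comp (by fun_prop : Differentiable ℂ fun z =>
        qsq τ * exp (-(2 * (z - t (k j) + psiC τ η ξp ξm ℓ k j))))
    · refine Ext.prod _ fun s _ => ?_
      refine ext_site hτ _ _ _ _ _ _ e he ?_ ?_ ?_ ?_ ?_ ?_ ?_
      · intro z hz h
        obtain ⟨n, mz, h⟩ := poch_exp_zero τ hτ _ h
        exact hz (memM z (-t s - ℓ s * η) (.inr (.inl ⟨s, rfl⟩)) n mz (by linear_combination h))
      · intro hlt z hz h
        obtain ⟨n, mz, h⟩ := poch_exp_zero τ hτ _ h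
        exact hz (memP z (t s + ℓ s * η) (.inl ⟨s, not_lt.1 hlt, rfl⟩) n (-mz)
          (by push_cast; linear_combination -h))
      · intro hle z hz h
        rw [qsq, ← Complex.exp_add, show 2 * τ + 2 * (t s - z - ℓ s * η) =
          -2 * (-τ - (t s - z - ℓ s * η)) by ring] at h
        obtain ⟨n, mz, h⟩ := poch_exp_zero τ hτ _ h
        exact hz (memM z (t s - ℓ s * η) (.inl ⟨s, hle, rfl⟩) (n + 1) mz
          (by push_cast; linear_combination h))
      · intro hle z hz h
        obtain ⟨mz, h⟩ := sinh_zero _ h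
        exact hz (memM z (t s - ℓ s * η) (.inl ⟨s, hle, rfl⟩) 0 (-mz)
          (by push_cast; linear_combination -h))
      · intro z ho
        simpa using ho.2.2.1 s j
      · intro z ho
        simpa using (ho.1.1 s j).2
      · intro hle z ho
        simpa using ho.1.2.2.1 j s hle
  -- the factors with arbitrary index
  have hone' : ∀ (m' : Fin M → Fin N) (i : Fin M) (e : ℂ), (e = 1 ∨ e = -1) →
      Ext S OK fun z => oneF τ η ξp ξm ℓ k m' t i e (Function.update x j z i) := by
    intro m' i e he
    by_cases hi : i = j
    · subst hi
      simpa only [Function.update_self] using hone m' e he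
    · simp only [Function.update_of_ne hi]
      exact .const _
  have hdy : ∀ i, Differentiable ℂ fun z => Function.update x j z i := by
    intro i
    by_cases hi : i = j
    · subst hi
      simp only [Function.update_self]
      fun_prop
    · simp only [Function.update_of_ne hi]
      fun_prop
  have hpair : ∀ (m' : Fin M → Fin N) (a b : Fin M), a < b → ∀ e f : ℂ, (e = 1 ∨ e = -1) →
      (f = 1 ∨ f = -1) → Ext S OK fun z =>
      hfun τ η (Function.update x j z a + Function.update x j z b) *
        hfun τ η (Function.update x j z a - Function.update x j z b) *
      (sinh (e * Function.update x j z a + f * Function.update x j z b + η) /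
        sinh (e * Function.update x j z a + f * Function.update x j z b)) *
      ((if m' a < m' b then sinh (e * Function.update x j z a - f * Function.update x j z b - η) /
        sinh (e * Function.update x j z a - f * Function.update x j z b) else 1) *
       (if m' b < m' a then sinh (f * Function.update x j z b - e * Function.update x j z a - η) /
        sinh (f * Function.update x j z b - e * Function.update x j z a) else 1)) := by
    intro m' a b hab e f he hf
    have hcc : ¬ (m' a < m' b ∧ m' b < m' a) := fun h => lt_asymm h.1 h.2
    have hok : ∀ z, OK z → sinh (Function.update x j z a + Function.update x j z b) ≠ 0 ∧
        sinh (Function.update x j z a - Function.update x j z b) ≠ 0 :=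
      fun z ho => ho.2.2.2 a b hab
    by_cases ha : a = j
    · have hb : b ≠ j := by rintro rfl; exact hab.ne ha
      refine ext_pair hτ (hdy a) (hdy b) ?_ ?_ hok e f he hf _ _ hcc
      · intro z hz h
        rw [ha, Function.update_self, Function.update_of_ne hb] at h
        obtain ⟨n, mz, h⟩ := poch_exp_zero τ hτ _ h
        exact hz (memM z (-x b + η) (.inr (.inr (.inr (.inr (.inr ⟨b, hb, rfl⟩))))) n mz
          (by linear_combination h))
      · intro z hz h
        rw [ha, Function.update_self, Function.update_of_ne hb] at h
        obtain ⟨n, mz, h⟩ := poch_exp_zero τ hτ _ h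
        exact hz (memM z (x b + η) (.inr (.inr (.inr (.inr (.inl ⟨b, ha ▸ hab, rfl⟩))))) n mz
          (by linear_combination h))
    · by_cases hb : b = j
      · refine ext_pair hτ (hdy a) (hdy b) ?_ ?_ hok e f he hf _ _ hcc
        · intro z hz h
          rw [hb, Function.update_self, Function.update_of_ne ha] at h
          obtain ⟨n, mz, h⟩ := poch_exp_zero τ hτ _ h
          exact hz (memM z (-x a + η) (.inr (.inr (.inr (.inr (.inr ⟨a, ha, rfl⟩))))) n mz
            (by linear_combination h))
        · intro z hz h
          rw [hb, Function.update_self, Function.update_of_ne ha] at h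
          obtain ⟨n, mz, h⟩ := poch_exp_zero τ hτ _ h
          exact hz (memP z (x a - η) (.inr ⟨a, hb ▸ hab, rfl⟩) n (-mz)
            (by push_cast; linear_combination -h))
      · simp only [Function.update_of_ne ha, Function.update_of_ne hb]
        exact .const _
  have hsg : ∀ (ε : Fin M → Bool) (i : Fin M), sg ε i = 1 ∨ sg ε i = -1 := by
    intro ε i
    unfold sg
    split_ifs <;> simp
  have total := (Ext.const (S := S) (OK := OK) (PhiF τ η ξp ξm ℓ k t *
      exp ((∑ i, ((nk m (m i) : ℂ) / 2 - ℓ (m i))) * η))).mul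
    (Ext.sum (rearr m) fun m' _ => Ext.sum Finset.univ fun (ε : Fin M → Bool) _ =>
      (Ext.prod Finset.univ fun i _ => hone' m' i (sg ε i) (hsg ε i)).mul
      (Ext.prod (Finset.univ.filter fun p : Fin M × Fin M => p.1 < p.2) fun p hp =>
        hpair m' p.1 p.2 (by simpa using hp) (sg ε p.1) (sg ε p.2) (hsg ε p.1) (hsg ε p.2)))
  refine total.congr fun z _ _ => ?_
  generalize Function.update x j z = y
  rw [wfun, betaF, mul_assoc, mul_assoc, mul_left_comm (w0 τ η ξp ξm ℓ k y t)]
  congr 2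
  rw [Finset.mul_sum]
  refine Finset.sum_congr rfl fun m' _ => ?_
  rw [Finset.mul_sum]
  refine Finset.sum_congr rfl fun ε _ => ?_
  have hC := prod_pairs (fun p : Fin M × Fin M => if m' p.1 < m' p.2 then
    sinh (sg ε p.1 * y p.1 - sg ε p.2 * y p.2 - η) / sinh (sg ε p.1 * y p.1 - sg ε p.2 * y p.2)
    else 1) (fun i => by simp)
  rw [← Finset.prod_filter] at hC
  rw [hC]
  simp only [w0, oneF, Prod.fst_swap, Prod.snd_swap, Finset.prod_mul_distrib]
  ring

end BQKZ
end
end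

section
/- The explicit trigonometric weight functions a^ℓ_d satisfy the quantum affine sl₂-recursion: (i) a^∅_∅(∅;∅) = 1, and (ii) for all N ≥ 1, M ≥ 0, ℓ, t ∈ ℂ^N, d ∈ P_N(M) and x ∈ ℂ^M, at every point where all sinh factors appearing in denominators are nonzero, a^ℓ_d(x;t) = e^{d_N(d_N/2 − ℓ_N)η} ∑_{J ⊆ {1,…,M}, #Jᶜ = d_N} (∏_{i ∈ Jᶜ} −sinh(η)/sinh(t_N − x_i − (1/2 + ℓ_N)η)) · (∏_{i ∈ J} sinh(t_N − x_i − (1/2 − ℓ_N)η)/sinh(t_N − x_i − (1/2 + ℓ_N)η)) · (∏_{i ∈ J, j ∈ Jᶜ} sinh(x_i − x_j + η)/sinh(x_i − x_j)) · a^{ℓ̂}_{d̂}(x_J; t̂), where Jᶜ := {1,…,M} ∖ J, ẑ := (z₁,…,z_{N−1}) for z ∈ ℂ^N, and x_J denotes the subtuple of x indexed by the elements of J in increasing order. -/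
open Complex MeasureTheory

noncomputable section

namespace BQKZ

/-- the explicit trigonometric weight functions `a^ℓ_d(x;t)`. -/
def aW (η : ℂ) (N' M' : ℕ) (ℓ : Fin N' → ℂ) (d : Fin N' → ℕ) (x : Fin M' → ℂ)
    (t : Fin N' → ℂ) : ℂ :=
  ∑ m ∈ Finset.univ.filter fun m : Fin M' → Fin N' => ∀ s, nk m s = d s,
    (∏ i,
        -(exp (((nk m (m i) : ℂ) / 2 - ℓ (m i)) * η) * sinh η) /
            sinh (t (m i) - x i - (1 / 2 + ℓ (m i)) * η) *
          ∏ s ∈ Finset.univ.filter fun s : Fin N' => m i < s,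
            sinh (t s - x i - (1 / 2 - ℓ s) * η) / sinh (t s - x i - (1 / 2 + ℓ s) * η)) *
      ∏ p ∈ Finset.univ.filter fun p : Fin M' × Fin M' => m p.1 < m p.2,
        sinh (x p.1 - x p.2 + η) / sinh (x p.1 - x p.2)

/-- splitting a product along the image of an embedding. -/
lemma prod_split {M k : ℕ} (e : Fin k ↪ Fin M) (J : Finset (Fin M))
    (he : Finset.univ.map e = J) (f : Fin M → ℂ) :
    ∏ i, f i = (∏ a, f (e a)) * ∏ i ∈ Jᶜ, f i := by
  rw [← Finset.prod_mul_prod_compl J f]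
  congr 1
  rw [← he, Finset.prod_map]

/-- counts of the extension at the non-last values. -/
lemma nk_castSucc {M N k : ℕ} (e : Fin k ↪ Fin M) (J : Finset (Fin M))
    (he : Finset.univ.map e = J) (m : Fin M → Fin (N + 1)) (m' : Fin k → Fin N)
    (h1 : ∀ a, m (e a) = (m' a).castSucc) (h2 : ∀ i, i ∉ J → m i = Fin.last N) (s : Fin N) :
    nk m s.castSucc = nk m' s := by
  unfold nk
  rw [← Finset.card_map e]
  congr 1
  ext i
  simp only [Finset.mem_filter, Finset.mem_univ, true_and, Finset.mem_map]
  constructor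
  · intro hi
    by_cases hJ : i ∈ J
    · rw [← he, Finset.mem_map] at hJ
      obtain ⟨a, -, rfl⟩ := hJ
      refine ⟨a, ?_, rfl⟩
      rw [h1] at hi
      exact Fin.castSucc_injective _ hi
    · rw [h2 i hJ] at hi
      exact absurd hi (Fin.castSucc_lt_last s).ne'
  · rintro ⟨a, ha, rfl⟩
    rw [h1, ha]

/-- counts of the extension at the last value. -/
lemma nk_last {M N k : ℕ} (e : Fin k ↪ Fin M) (J : Finset (Fin M))
    (he : Finset.univ.map e = J) (m : Fin M → Fin (N + 1)) (m' : Fin k → Fin N)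
    (h1 : ∀ a, m (e a) = (m' a).castSucc) (h2 : ∀ i, i ∉ J → m i = Fin.last N) :
    nk m (Fin.last N) = Jᶜ.card := by
  unfold nk
  congr 1
  ext i
  simp only [Finset.mem_filter, Finset.mem_univ, true_and, Finset.mem_compl]
  constructor
  · intro hi hJ
    rw [← he, Finset.mem_map] at hJ
    obtain ⟨a, -, rfl⟩ := hJ
    rw [h1] at hi
    exact absurd hi (Fin.castSucc_lt_last _).ne
  · exact h2 i

/-- the summand of `aW`. -/
def aTerm (η : ℂ) (N' M' : ℕ) (ℓ : Fin N' → ℂ) (x : Fin M' → ℂ)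
    (t : Fin N' → ℂ) (m : Fin M' → Fin N') : ℂ :=
    (∏ i,
        -(exp (((nk m (m i) : ℂ) / 2 - ℓ (m i)) * η) * sinh η) /
            sinh (t (m i) - x i - (1 / 2 + ℓ (m i)) * η) *
          ∏ s ∈ Finset.univ.filter fun s : Fin N' => m i < s,
            sinh (t s - x i - (1 / 2 - ℓ s) * η) / sinh (t s - x i - (1 / 2 + ℓ s) * η)) *
      ∏ p ∈ Finset.univ.filter fun p : Fin M' × Fin M' => m p.1 < m p.2,
        sinh (x p.1 - x p.2 + η) / sinh (x p.1 - x p.2)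

/-- the pair product splits. -/
lemma pair_split {M N k : ℕ} (e : Fin k ↪ Fin M) (J : Finset (Fin M))
    (he : Finset.univ.map e = J) (m : Fin M → Fin (N + 1)) (m' : Fin k → Fin N)
    (h1 : ∀ a, m (e a) = (m' a).castSucc) (h2 : ∀ i, i ∉ J → m i = Fin.last N)
    (f : Fin M → Fin M → ℂ) :
    (∏ p ∈ Finset.univ.filter fun p : Fin M × Fin M => m p.1 < m p.2, f p.1 p.2) =
      (∏ i ∈ J, ∏ j ∈ Jᶜ, f i j) *
      ∏ p ∈ Finset.univ.filter fun p : Fin k × Fin k => m' p.1 < m' p.2, f (e p.1) (e p.2) := by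
  rw [Finset.prod_filter, Finset.prod_filter, Fintype.prod_prod_type, Fintype.prod_prod_type]
  dsimp only
  rw [prod_split e J he]
  have hc : ∏ i ∈ Jᶜ, ∏ j, (if m i < m j then f i j else 1) = 1 := by
    refine Finset.prod_eq_one fun i hi => Finset.prod_eq_one fun j _ => ?_
    rw [h2 i (Finset.mem_compl.mp hi), if_neg (not_lt.mpr (Fin.le_last _))]
  have hJ : (∏ i ∈ J, ∏ j ∈ Jᶜ, f i j) = ∏ a, ∏ j ∈ Jᶜ, f (e a) j := by
    conv_lhs => rw [← he]
    rw [Finset.prod_map]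
    rw [he]
  rw [hc, mul_one, hJ, ← Finset.prod_mul_distrib]
  refine Finset.prod_congr rfl fun a _ => ?_
  rw [prod_split e J he, mul_comm]
  congr 1
  · refine Finset.prod_congr rfl fun j hj => ?_
    rw [h2 j (Finset.mem_compl.mp hj), h1, if_pos (Fin.castSucc_lt_last _)]
  · refine Finset.prod_congr rfl fun b _ => ?_
    rw [h1, h1]
    simp only [Fin.castSucc_lt_castSucc_iff]

lemma aTerm_split (η : ℂ) {M N k : ℕ} (e : Fin k ↪ Fin M) (J : Finset (Fin M))
    (he : Finset.univ.map e = J) (m : Fin M → Fin (N + 1)) (m' : Fin k → Fin N)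
    (h1 : ∀ a, m (e a) = (m' a).castSucc) (h2 : ∀ i, i ∉ J → m i = Fin.last N)
    (ℓ t : Fin (N + 1) → ℂ) (x : Fin M → ℂ) (D : ℕ) (hD : Jᶜ.card = D) :
    aTerm η (N + 1) M ℓ x t m =
      exp ((D : ℂ) * ((D : ℂ) / 2 - ℓ (Fin.last N)) * η) *
        ((∏ i ∈ Jᶜ,
            -sinh η / sinh (t (Fin.last N) - x i - (1 / 2 + ℓ (Fin.last N)) * η)) *
          (∏ i ∈ J,
            sinh (t (Fin.last N) - x i - (1 / 2 - ℓ (Fin.last N)) * η) /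
              sinh (t (Fin.last N) - x i - (1 / 2 + ℓ (Fin.last N)) * η)) *
          (∏ i ∈ J, ∏ j ∈ Jᶜ, sinh (x i - x j + η) / sinh (x i - x j)) *
          aTerm η N k (fun s => ℓ s.castSucc) (fun i => x (e i)) (fun s => t s.castSucc) m') := by
  unfold aTerm
  rw [pair_split e J he m m' h1 h2 (fun i j => sinh (x i - x j + η) / sinh (x i - x j))]
  rw [prod_split e J he]
  have hA : ∏ i ∈ Jᶜ, (-(exp (((nk m (m i) : ℂ) / 2 - ℓ (m i)) * η) * sinh η) /
            sinh (t (m i) - x i - (1 / 2 + ℓ (m i)) * η) *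
          ∏ s ∈ Finset.univ.filter fun s : Fin (N + 1) => m i < s,
            sinh (t s - x i - (1 / 2 - ℓ s) * η) / sinh (t s - x i - (1 / 2 + ℓ s) * η)) =
      exp ((D : ℂ) * ((D : ℂ) / 2 - ℓ (Fin.last N)) * η) * ∏ i ∈ Jᶜ,
            -sinh η / sinh (t (Fin.last N) - x i - (1 / 2 + ℓ (Fin.last N)) * η) := by
    have hE : exp ((D : ℂ) * ((D : ℂ) / 2 - ℓ (Fin.last N)) * η) =
        ∏ i ∈ Jᶜ, exp (((D : ℂ) / 2 - ℓ (Fin.last N)) * η) := by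
      rw [Finset.prod_const, hD, ← Complex.exp_nat_mul, mul_assoc]
    rw [hE, ← Finset.prod_mul_distrib]
    refine Finset.prod_congr rfl fun i hi => ?_
    rw [h2 i (Finset.mem_compl.mp hi), nk_last e J he m m' h1 h2, hD,
      Finset.filter_false_of_mem (fun s _ => not_lt.mpr (Fin.le_last s)), Finset.prod_empty]
    ring
  have hB : ∏ i ∈ J, sinh (t (Fin.last N) - x i - (1 / 2 - ℓ (Fin.last N)) * η) /
              sinh (t (Fin.last N) - x i - (1 / 2 + ℓ (Fin.last N)) * η) =
      ∏ a, sinh (t (Fin.last N) - x (e a) - (1 / 2 - ℓ (Fin.last N)) * η) /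
              sinh (t (Fin.last N) - x (e a) - (1 / 2 + ℓ (Fin.last N)) * η) := by
    rw [← he, Finset.prod_map]
  have hC : ∏ a, (-(exp (((nk m (m (e a)) : ℂ) / 2 - ℓ (m (e a))) * η) * sinh η) /
            sinh (t (m (e a)) - x (e a) - (1 / 2 + ℓ (m (e a))) * η) *
          ∏ s ∈ Finset.univ.filter fun s : Fin (N + 1) => m (e a) < s,
            sinh (t s - x (e a) - (1 / 2 - ℓ s) * η) /
              sinh (t s - x (e a) - (1 / 2 + ℓ s) * η)) =
      (∏ a, sinh (t (Fin.last N) - x (e a) - (1 / 2 - ℓ (Fin.last N)) * η) /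
              sinh (t (Fin.last N) - x (e a) - (1 / 2 + ℓ (Fin.last N)) * η)) *
      ∏ a, (-(exp (((nk m' (m' a) : ℂ) / 2 - ℓ (m' a).castSucc) * η) * sinh η) /
            sinh (t (m' a).castSucc - x (e a) - (1 / 2 + ℓ (m' a).castSucc) * η) *
          ∏ s ∈ Finset.univ.filter fun s : Fin N => m' a < s,
            sinh (t s.castSucc - x (e a) - (1 / 2 - ℓ s.castSucc) * η) /
              sinh (t s.castSucc - x (e a) - (1 / 2 + ℓ s.castSucc) * η)) := by
    rw [← Finset.prod_mul_distrib]
    refine Finset.prod_congr rfl fun a _ => ?_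
    rw [h1, nk_castSucc e J he m m' h1 h2, Finset.prod_filter, Finset.prod_filter,
      Fin.prod_univ_castSucc, if_pos (Fin.castSucc_lt_last _)]
    simp only [Fin.castSucc_lt_castSucc_iff]
    ring
  rw [hA, hB, hC]
  ring

lemma aW_eq (η : ℂ) (N' M' : ℕ) (ℓ : Fin N' → ℂ) (d : Fin N' → ℕ) (x : Fin M' → ℂ)
    (t : Fin N' → ℂ) : aW η N' M' ℓ d x t =
      ∑ m ∈ Finset.univ.filter fun m : Fin M' → Fin N' => ∀ s, nk m s = d s,
        aTerm η N' M' ℓ x t m := rfl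

/-- extension of a map by the last value outside `J`. -/
def extJ {M N : ℕ} (J : Finset (Fin M)) (m' : Fin J.card → Fin N) (i : Fin M) : Fin (N + 1) :=
  if h : i ∈ J then (m' ((J.orderIsoOfFin rfl).symm ⟨i, h⟩)).castSucc else Fin.last N

lemma extJ_emb {M N : ℕ} (J : Finset (Fin M)) (m' : Fin J.card → Fin N) (a : Fin J.card) :
    extJ J m' (J.orderEmbOfFin rfl a) = (m' a).castSucc := by
  unfold extJ
  rw [dif_pos (Finset.orderEmbOfFin_mem J rfl a)]
  congr 2
  rw [OrderIso.symm_apply_eq]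
  rfl

lemma extJ_notMem {M N : ℕ} (J : Finset (Fin M)) (m' : Fin J.card → Fin N) (i : Fin M)
    (h : i ∉ J) : extJ J m' i = Fin.last N := dif_neg h

lemma map_emb {M : ℕ} (J : Finset (Fin M)) :
    Finset.univ.map (J.orderEmbOfFin rfl).toEmbedding = J :=
  Finset.map_orderEmbOfFin_univ J rfl

lemma recursion (η : ℂ) (N M : ℕ) (ℓ : Fin (N + 1) → ℂ) (d : Fin (N + 1) → ℕ)
      (x : Fin M → ℂ) (t : Fin (N + 1) → ℂ) :
        aW η (N + 1) M ℓ d x t =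
          exp ((d (Fin.last N) : ℂ) * ((d (Fin.last N) : ℂ) / 2 - ℓ (Fin.last N)) * η) *
            ∑ J ∈ Finset.univ.filter fun J : Finset (Fin M) => Jᶜ.card = d (Fin.last N),
              (∏ i ∈ Jᶜ,
                  -sinh η / sinh (t (Fin.last N) - x i - (1 / 2 + ℓ (Fin.last N)) * η)) *
                (∏ i ∈ J,
                  sinh (t (Fin.last N) - x i - (1 / 2 - ℓ (Fin.last N)) * η) /
                    sinh (t (Fin.last N) - x i - (1 / 2 + ℓ (Fin.last N)) * η)) *
                (∏ i ∈ J, ∏ j ∈ Jᶜ, sinh (x i - x j + η) / sinh (x i - x j)) *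
                aW η N J.card (fun s => ℓ s.castSucc) (fun s => d s.castSucc)
                  (fun i => x (J.orderEmbOfFin rfl i)) (fun s => t s.castSucc) := by
  rw [aW_eq, Finset.mul_sum]
  rw [← Finset.sum_fiberwise_of_maps_to
    (t := Finset.univ.filter fun J : Finset (Fin M) => Jᶜ.card = d (Fin.last N))
    (g := fun m : Fin M → Fin (N + 1) => Finset.univ.filter fun i => m i ≠ Fin.last N)]
  · refine Finset.sum_congr rfl fun J hJ => ?_
    replace hJ : Jᶜ.card = d (Fin.last N) := (Finset.mem_filter.mp hJ).2
    rw [aW_eq, Finset.mul_sum, Finset.mul_sum]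
    symm
    refine Finset.sum_bij (fun m' _ => extJ J m') ?_ ?_ ?_ ?_
    · intro m' hm'
      simp only [Finset.mem_filter, Finset.mem_univ, true_and] at hm' ⊢
      refine ⟨fun s => ?_, ?_⟩
      · refine Fin.lastCases ?_ (fun s => ?_) s
        · rw [nk_last _ J (map_emb J) _ m' (extJ_emb J m') (extJ_notMem J m'), hJ]
        · rw [nk_castSucc _ J (map_emb J) _ m' (extJ_emb J m') (extJ_notMem J m'), hm']
      · ext i
        simp only [Finset.mem_filter, Finset.mem_univ, true_and]
        by_cases h : i ∈ J
        · simp [extJ, h]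
        · simp [extJ, h]
    · intro m1 _ m2 _ h
      funext a
      have := congrFun h (J.orderEmbOfFin rfl a)
      rw [extJ_emb, extJ_emb] at this
      exact Fin.castSucc_injective _ this
    · intro m hm
      simp only [Finset.mem_filter, Finset.mem_univ, true_and] at hm
      obtain ⟨hm, hmJ⟩ := hm
      have hne : ∀ a, m (J.orderEmbOfFin rfl a) ≠ Fin.last N := by
        intro a
        have := Finset.orderEmbOfFin_mem J rfl a
        rw [Finset.ext_iff] at hmJ
        simpa using (hmJ _).2 this
      have hE : extJ J (fun a => (m (J.orderEmbOfFin rfl a)).castPred (hne a)) = m := by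
        funext i
        by_cases h : i ∈ J
        · have h' := h
          rw [← map_emb J, Finset.mem_map] at h'
          obtain ⟨a, -, rfl⟩ := h'
          exact (extJ_emb J _ a).trans (Fin.castSucc_castPred _ _)
        · rw [extJ_notMem _ _ _ h]
          by_contra hc
          apply h
          rw [← hmJ]
          simp only [Finset.mem_filter, Finset.mem_univ, true_and]
          exact fun hh => hc hh.symm
      refine ⟨_, ?_, hE⟩
      simp only [Finset.mem_filter, Finset.mem_univ, true_and]
      intro s
      rw [← hm s.castSucc]
      conv_rhs => rw [← hE]
      rw [nk_castSucc _ J (map_emb J) _ _ (extJ_emb J _) (extJ_notMem J _)]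
    · intro m' _
      rw [aTerm_split η _ J (map_emb J) _ m' (extJ_emb J m') (extJ_notMem J m') ℓ t x _ hJ]
      rfl
  · intro m hm
    simp only [Finset.mem_filter, Finset.mem_univ, true_and] at hm ⊢
    rw [← hm (Fin.last N)]
    unfold nk
    congr 1
    ext i
    simp

/-- the functions `a^ℓ_d` satisfy the quantum affine `sl₂`-recursion. -/
theorem stmt17 (η : ℂ) :
    (∀ (ℓ : Fin 0 → ℂ) (d : Fin 0 → ℕ) (x : Fin 0 → ℂ) (t : Fin 0 → ℂ),
      aW η 0 0 ℓ d x t = 1) ∧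
    ∀ (N M : ℕ) (ℓ : Fin (N + 1) → ℂ) (d : Fin (N + 1) → ℕ), (∑ s, d s) = M →
      ∀ (x : Fin M → ℂ) (t : Fin (N + 1) → ℂ),
        (∀ (s : Fin (N + 1)) (i : Fin M), sinh (t s - x i - (1 / 2 + ℓ s) * η) ≠ 0) →
        (∀ i j : Fin M, i ≠ j → sinh (x i - x j) ≠ 0) →
        aW η (N + 1) M ℓ d x t =
          exp ((d (Fin.last N) : ℂ) * ((d (Fin.last N) : ℂ) / 2 - ℓ (Fin.last N)) * η) *
            ∑ J ∈ Finset.univ.filter fun J : Finset (Fin M) => Jᶜ.card = d (Fin.last N),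
              (∏ i ∈ Jᶜ,
                  -sinh η / sinh (t (Fin.last N) - x i - (1 / 2 + ℓ (Fin.last N)) * η)) *
                (∏ i ∈ J,
                  sinh (t (Fin.last N) - x i - (1 / 2 - ℓ (Fin.last N)) * η) /
                    sinh (t (Fin.last N) - x i - (1 / 2 + ℓ (Fin.last N)) * η)) *
                (∏ i ∈ J, ∏ j ∈ Jᶜ, sinh (x i - x j + η) / sinh (x i - x j)) *
                aW η N J.card (fun s => ℓ s.castSucc) (fun s => d s.castSucc)
                  (fun i => x (J.orderEmbOfFin rfl i)) (fun s => t s.castSucc) := by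
  refine ⟨fun ℓ d x t => ?_, fun N M ℓ d _ x t _ _ => recursion η N M ℓ d x t⟩
  simp [aW]

end BQKZ
end
end
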